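/- Let (G,L) be a minimal list-obstruction with all lists subsets of {1,2,3} of size at most 2, and suppose that all propagation paths in (G,L) have at most λ vertices, where λ ≥ 20. Then |V(G)| ≤ 4λ + 4. -/

import Mathlib

def ListColorableOn {V : Type*} (G : SimpleGraph V) (L : V → Finset ℕ) (S : Set V) : Prop :=
  ∃ c : V → ℕ, (∀ v ∈ S, c v ∈ L v) ∧ ∀ u ∈ S, ∀ w ∈ S, G.Adj u w → c u ≠ c w

def MinimalListObstruction {V : Type*} (G : SimpleGraph V) (L : V → Finset ℕ) : Prop :=
  ¬ ListColorableOn G L Set.univ ∧ ∀ S : Set V, S ≠ Set.univ → ListColorableOn G L S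

/-- A propagation path in `(G,L)`: a (not necessarily induced) path `v 0 - … - v n`
in `G` whose vertices beyond the first have lists of size two, together with the
coloring `c` obtained by giving `v 0` a color from its list and updating along the
path, such that every chord `v i v j` (with `3 ≤ i < j` and `j ≥ i + 2` in 1-based
indexing) satisfies the shape condition `S(v i) = αβ`, `S(v j) = βγ` with
`{α, β, γ} = {1, 2, 3}` pairwise distinct. -/
structure PropPath {V : Type*} (G : SimpleGraph V) (L : V → Finset ℕ) where
  n : ℕ
  v : Fin (n + 1) → V
  inj : Function.Injective v
  adj : ∀ i : Fin n, G.Adj (v i.castSucc) (v i.succ)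
  c : Fin (n + 1) → ℕ
  start_mem : c 0 ∈ L (v 0)
  size2 : ∀ i : Fin (n + 1), i ≠ 0 → (L (v i)).card = 2
  upd : ∀ i : Fin n, c i.succ ∈ L (v i.succ) ∧ c i.castSucc ∈ L (v i.succ) ∧
    c i.succ ≠ c i.castSucc
  chord : ∀ i j : Fin (n + 1), 2 ≤ i.val → i.val + 2 ≤ j.val → G.Adj (v i) (v j) →
    ∃ α β γ : ℕ, α ≠ β ∧ β ≠ γ ∧ α ≠ γ ∧
      L (v i) = {α, β} ∧ c i = α ∧ L (v j) = {β, γ} ∧ c j = β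


section ListPropagation

variable {V : Type*} {G : SimpleGraph V} {L : V → Finset ℕ}

/-- Giving a vertex the color `x.2` leaves only the color `z.2` at the neighbor `z.1`. -/
def Forces (G : SimpleGraph V) (L : V → Finset ℕ) (x z : V × ℕ) : Prop :=
  G.Adj x.1 z.1 ∧ x.2 ∈ L z.1 ∧ z.2 ∈ L z.1 ∧ z.2 ≠ x.2 ∧ (L z.1).card = 2

/-- `z` is obtained from `x` by `n` successive propagation steps. -/
def ForcesIn (G : SimpleGraph V) (L : V → Finset ℕ) : ℕ → V × ℕ → V × ℕ → Prop
  | 0, x, z => x = z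
  | n + 1, x, z => ∃ w, ForcesIn G L n x w ∧ Forces G L w z

/-- Adjacent vertices receiving the same color. -/
def Clash (G : SimpleGraph V) (x z : V × ℕ) : Prop := G.Adj x.1 z.1 ∧ x.2 = z.2

/-- The propagation `y ⇝ x ⇝ z` ends with a contradiction: either `z` clashes with `x`, or
`x = z` and the color of `z` is the only one available at some neighbor. -/
def Contradicts (G : SimpleGraph V) (L : V → Finset ℕ) (x z : V × ℕ) : Prop :=
  Clash G x z ∨ (x = z ∧ ∃ q, G.Adj z.1 q ∧ L q = {z.2})

/-- `f` is a proper list coloring of the vertices in `S`. -/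
def IsListColoring (G : SimpleGraph V) (L : V → Finset ℕ) (S : Set V) (f : V → ℕ) : Prop :=
  (∀ v ∈ S, f v ∈ L v) ∧ ∀ u ∈ S, ∀ w ∈ S, G.Adj u w → f u ≠ f w

theorem eq_of_mem_of_card_eq_two {s : Finset ℕ} {a b c : ℕ} (hs : s.card = 2) (ha : a ∈ s)
    (hb : b ∈ s) (hc : c ∈ s) (hab : a ≠ b) (hcb : c ≠ b) : a = c := by
  obtain ⟨x, y, hxy, rfl⟩ := Finset.card_eq_two.mp hs
  simp only [Finset.mem_insert, Finset.mem_singleton] at ha hb hc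
  omega

theorem Clash.symm {x z : V × ℕ} (h : Clash G x z) : Clash G z x := ⟨h.1.symm, h.2.symm⟩

theorem ForcesIn.trans {m n : ℕ} {x w z : V × ℕ} (h₁ : ForcesIn G L m x w)
    (h₂ : ForcesIn G L n w z) : ForcesIn G L (m + n) x z := by
  induction n generalizing z with
  | zero => obtain rfl : w = z := h₂; exact h₁
  | succ n ih =>
    obtain ⟨u, hu, hs⟩ := h₂
    exact ⟨u, ih hu, hs⟩

theorem Forces.forcesIn {x z : V × ℕ} (h : Forces G L x z) : ForcesIn G L 1 x z := ⟨x, rfl, h⟩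

/-- Propagating backwards from a clash. -/
theorem ForcesIn.exists_reverse {n : ℕ} {x z w : V × ℕ} (h : ForcesIn G L n x z)
    (hw : Clash G w z) : ∃ z', ForcesIn G L n w z' ∧ Clash G z' x := by
  induction n generalizing z w with
  | zero => obtain rfl : x = z := h; exact ⟨w, rfl, hw⟩
  | succ n ih =>
    obtain ⟨u, hu, hadj, hu2, hz2, hne, hcard⟩ := h
    obtain ⟨z', hz', hc⟩ := ih (w := (z.1, u.2)) hu ⟨hadj.symm, rfl⟩
    refine ⟨z', ?_, hc⟩
    have hs : Forces G L w (z.1, u.2) :=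
      ⟨hw.1, hw.2 ▸ hz2, hu2, by rw [hw.2]; exact hne.symm, hcard⟩
    rw [add_comm]
    exact hs.forcesIn.trans hz'

/-- The first `n` steps of `g` are propagation steps. -/
def IsForcingChain (G : SimpleGraph V) (L : V → Finset ℕ) (g : ℕ → V × ℕ) (n : ℕ) : Prop :=
  ∀ i < n, Forces G L (g i) (g (i + 1))

theorem IsForcingChain.forcesIn {g : ℕ → V × ℕ} {n i j : ℕ} (h : IsForcingChain G L g n)
    (hij : i ≤ j)
    (hj : j ≤ n) : ForcesIn G L (j - i) (g i) (g j) := by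
  induction j, hij using Nat.le_induction with
  | base => rw [Nat.sub_self]; rfl
  | succ j hij ih =>
    rw [Nat.succ_sub hij]
    exact ⟨g j, ih (by omega), h j (by omega)⟩

theorem IsForcingChain.card_eq_two {g : ℕ → V × ℕ} {n i : ℕ} (h : IsForcingChain G L g n)
    (h0 : 0 < i)
    (hi : i ≤ n) : (L (g i).1).card = 2 := by
  obtain ⟨k, rfl⟩ := Nat.exists_eq_add_of_lt h0
  simpa using (h (0 + k) (by omega)).2.2.2.2

theorem IsForcingChain.mem {g : ℕ → V × ℕ} {n i : ℕ} (h : IsForcingChain G L g n)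
    (h0 : (g 0).2 ∈ L (g 0).1) (hi : i ≤ n) : (g i).2 ∈ L (g i).1 := by
  cases i with
  | zero => exact h0
  | succ k => exact (h k (by omega)).2.2.1

theorem IsForcingChain.exists_extend {g : ℕ → V × ℕ} {a b : ℕ} {z : V × ℕ}
    (h : IsForcingChain G L g a)
    (hb : ForcesIn G L b (g a) z) :
    ∃ g', (∀ i ≤ a, g' i = g i) ∧ IsForcingChain G L g' (a + b) ∧ g' (a + b) = z := by
  induction b generalizing z with
  | zero => exact ⟨g, fun _ _ => rfl, h, hb⟩
  | succ b ih =>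
    obtain ⟨w, hw, hs⟩ := hb
    obtain ⟨g', hg, hc, he⟩ := ih hw
    refine ⟨fun i => if i ≤ a + b then g' i else z, ?_, ?_, ?_⟩
    · intro i hi
      simp only [show i ≤ a + b by omega, if_true, hg i hi]
    · intro i hi
      rcases Nat.lt_or_ge i (a + b) with hlt | hge
      · simp only [show i ≤ a + b by omega, show i + 1 ≤ a + b by omega, if_true]
        exact hc i hlt
      · obtain rfl : i = a + b := by omega
        simpa [he] using hs
    · simp only [show ¬ a + (b + 1) ≤ a + b by omega, if_false]

theorem ForcesIn.exists_chain {a b : ℕ} {x w z : V × ℕ} (ha : ForcesIn G L a x w)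
    (hb : ForcesIn G L b w z) :
    ∃ g, g 0 = x ∧ g a = w ∧ g (a + b) = z ∧ IsForcingChain G L g (a + b) := by
  obtain ⟨g, hg, hc, he⟩ := IsForcingChain.exists_extend (g := fun _ => x) (a := 0)
    (fun i hi => absurd hi (by omega)) ha
  rw [Nat.zero_add] at hc he
  obtain ⟨g', hg', hc', he'⟩ := hc.exists_extend (he.symm ▸ hb)
  exact ⟨g', by rw [hg' 0 (by omega), hg 0 le_rfl], by rw [hg' a le_rfl, he], he', hc'⟩

/-- If two vertices on a chain coincide but get different colors, the chain already clashes. -/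
theorem IsForcingChain.clash_of_fst_eq {g : ℕ → V × ℕ} {n i j : ℕ} (h : IsForcingChain G L g n)
    (h0 : (g 0).2 ∈ L (g 0).1) (hij : i < j) (hj : j ≤ n) (hv : (g i).1 = (g j).1)
    (hc : (g i).2 ≠ (g j).2) : Clash G (g i) (g (j - 1)) := by
  obtain ⟨k, rfl⟩ : ∃ k, j = k + 1 := ⟨j - 1, by omega⟩
  obtain ⟨hadj, h1, h2, hne, hcard⟩ := h k (by omega)
  refine ⟨hv ▸ hadj.symm, ?_⟩
  exact eq_of_mem_of_card_eq_two hcard (hv ▸ h.mem h0 (by omega)) h2 h1 hc hne.symm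

/-- A proper coloring agreeing with the start of a chain segment agrees with its end. -/
theorem IsForcingChain.coloring_eq {g : ℕ → V × ℕ} {n i j : ℕ} (h : IsForcingChain G L g n)
    (hij : i ≤ j)
    (hj : j ≤ n) {S : Set V} {f : V → ℕ} (hf : IsListColoring G L S f)
    (hS : ∀ k, i ≤ k → k ≤ j → (g k).1 ∈ S) (hi : f (g i).1 = (g i).2) :
    f (g j).1 = (g j).2 := by
  induction j, hij using Nat.le_induction with
  | base => exact hi
  | succ j hij ih =>
    have hprev := ih (by omega) (fun k h1 h2 => hS k h1 (by omega))
    obtain ⟨hadj, h1, h2, hne, hcard⟩ := h j (by omega)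
    have hm := hS (j + 1) (by omega) le_rfl
    refine eq_of_mem_of_card_eq_two hcard (hf.1 _ hm) h1 h2 ?_ hne
    rw [← hprev]
    exact (hf.2 _ (hS j hij (by omega)) _ hm hadj).symm

/-- A chord neither of whose end colors lies in the list of the other end forces its later end. -/
theorem IsForcingChain.coloring_eq_of_chord (hsub : ∀ v, L v ⊆ ({1, 2, 3} : Finset ℕ))
    {g : ℕ → V × ℕ} {n i j : ℕ} (h : IsForcingChain G L g n)
    (h0 : (g 0).2 ∈ L (g 0).1) (hij : i < j) (hj : j ≤ n)
    (hadj : G.Adj (g i).1 (g j).1) (h1 : (g i).2 ∉ L (g j).1)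
    (h2 : (g j).2 ∉ L (g i).1) {S : Set V} {f : V → ℕ} (hf : IsListColoring G L S f)
    (hS : ∀ k, i ≤ k → k ≤ j → (g k).1 ∈ S) : f (g j).1 = (g j).2 := by
  by_cases hfi : f (g i).1 = (g i).2
  · exact h.coloring_eq hij.le hj hf hS hfi
  have hSi := hS i le_rfl hij.le
  have hSj := hS j hij.le le_rfl
  have hne := hf.2 _ hSi _ hSj hadj
  have a1 := hf.1 _ hSi
  have a2 := hf.1 _ hSj
  have a3 := h.mem h0 (i := i) (by omega)
  have a4 := h.mem h0 hj
  have b1 := hsub _ a1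
  have b2 := hsub _ a2
  have b3 := hsub _ a3
  have b4 := hsub _ a4
  have n1 : f (g j).1 ≠ (g i).2 := fun e => h1 (e ▸ a2)
  have n2 : f (g i).1 ≠ (g j).2 := fun e => h2 (e ▸ a1)
  have n3 : (g i).2 ≠ (g j).2 := fun e => h2 (e ▸ a3)
  simp only [Finset.mem_insert, Finset.mem_singleton] at b1 b2 b3 b4
  omega

/-- A chain segment all of whose relevant chords are of the permitted shape is a propagation
path. -/
theorem IsForcingChain.length_le {lam : ℕ}
    (hpaths : ∀ P : PropPath G L, P.n + 1 ≤ lam) {g : ℕ → V × ℕ} {n p r : ℕ}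
    (h : IsForcingChain G L g n) (h0 : (g 0).2 ∈ L (g 0).1) (hr : r ≤ n) (hpr : p < r + 1)
    (hinj : ∀ i j, i < j → j ≤ n → (g i).1 ≠ (g j).1)
    (hgood : ∀ i j, p < i → i + 2 ≤ j → j ≤ r → G.Adj (g i).1 (g j).1 →
      (g i).2 ∉ L (g j).1 ∧ (g j).2 ∈ L (g i).1) : r + 1 - p ≤ lam := by
  let P : PropPath G L :=
    { n := r - p
      v := fun i => (g (p + i)).1
      inj := by
        intro i j hij
        by_contra hne
        have hne' : (i : ℕ) ≠ j := fun e => hne (Fin.ext e)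
        rcases lt_or_gt_of_ne hne' with hlt | hlt
        · exact hinj _ _ (show p + i < p + j by omega) (by omega) hij
        · exact hinj _ _ (show p + j < p + i by omega) (by omega) hij.symm
      adj := fun i => (h (p + i) (by omega)).1
      c := fun i => (g (p + i)).2
      start_mem := h.mem h0 (by simp; omega)
      size2 := by
        intro i hi
        have : (i : ℕ) ≠ 0 := fun e => hi (Fin.ext e)
        exact h.card_eq_two (by omega) (by omega)
      upd := fun i =>
        let hs := h (p + i) (by omega)
        ⟨hs.2.2.1, hs.2.1, hs.2.2.2.1⟩
      chord := by
        intro i j hi hij hadj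
        obtain ⟨h1, h2⟩ := hgood (p + i) (p + j) (by omega) (by omega) (by omega) hadj
        have hmj := h.mem h0 (i := p + j) (by omega)
        have hmi := h.mem h0 (i := p + i) (by omega)
        have hci := h.card_eq_two (i := p + i) (by omega) (by omega)
        have hcj := h.card_eq_two (i := p + j) (by omega) (by omega)
        have hne : (g (p + i)).2 ≠ (g (p + j)).2 := fun e => h1 (e ▸ hmj)
        obtain ⟨γ, hγ, hγne⟩ := Finset.exists_mem_ne
          (show 1 < (L (g (p + j)).1).card by omega) (g (p + j)).2
        refine ⟨(g (p + i)).2, (g (p + j)).2, γ, hne, hγne.symm, fun e => h1 (e ▸ hγ), ?_, rfl,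
          ?_, rfl⟩
        · refine (Finset.eq_of_subset_of_card_le ?_ ?_).symm
          · simp [Finset.insert_subset_iff, hmi, h2]
          · rw [hci, Finset.card_pair hne]
        · refine (Finset.eq_of_subset_of_card_le ?_ ?_).symm
          · simp [Finset.insert_subset_iff, hmj, hγ]
          · rw [hcj, Finset.card_pair hγne.symm] }
  have hP : r - p + 1 ≤ lam := hpaths P
  omega

theorem MinimalListObstruction.exists_coloring_compl (hmin : MinimalListObstruction G L) (w : V) :
    ∃ f, IsListColoring G L {w}ᶜ f :=
  hmin.2 _ (by simp)

/-- Propagating any color of any vertex of a minimal obstruction leads to a contradiction. -/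
theorem MinimalListObstruction.exists_contradicts (hsize : ∀ v, (L v).card ≤ 2)
    (hmin : MinimalListObstruction G L) (y : V × ℕ) (hy : y.2 ∈ L y.1) :
    ∃ a b x z, ForcesIn G L a y x ∧ ForcesIn G L b x z ∧ Contradicts G L x z := by
  by_contra! hno
  have hclash : ∀ m n x z, ForcesIn G L m y x → ForcesIn G L n y z → ¬ Clash G x z := by
    intro m n x z hx hz hc
    obtain ⟨z', hz', hc'⟩ := hz.exists_reverse hc
    exact hno 0 (m + n) y z' rfl (hx.trans hz') (Or.inl hc'.symm)
  have hmem : ∀ n x, ForcesIn G L n y x → x.2 ∈ L x.1 := by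
    intro n x hx
    cases n with
    | zero => obtain rfl : y = x := hx; exact hy
    | succ n => obtain ⟨w, -, hw⟩ := hx; exact hw.2.2.1
  obtain ⟨f, hf1, hf2⟩ := hmin.2 {w | ¬ ∃ a n, ForcesIn G L n y (w, a)} (by
    intro e
    have : y.1 ∈ {w | ¬ ∃ a n, ForcesIn G L n y (w, a)} := e ▸ Set.mem_univ _
    exact this ⟨y.2, 0, rfl⟩)
  have houter : ∀ u w a n, ForcesIn G L n y (u, a) → (¬ ∃ b m, ForcesIn G L m y (w, b)) →
      G.Adj u w → f w ≠ a := by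
    intro u w a n hu hw hadj e
    have ha : a ∈ L w := e ▸ hf1 w hw
    by_cases hcard : (L w).card = 2
    · obtain ⟨b, hb, hne⟩ := Finset.exists_mem_ne (show 1 < (L w).card by omega) a
      exact hw ⟨b, n + 1, (u, a), hu, hadj, ha, hb, hne, hcard⟩
    · have h1 : (L w).card = 1 := by
        have := hsize w
        have := Finset.card_pos.mpr ⟨a, ha⟩
        omega
      obtain ⟨b, hb⟩ := Finset.card_eq_one.mp h1
      have hab : a = b := by simpa [hb] using ha
      exact hno n 0 (u, a) (u, a) hu rfl (Or.inr ⟨rfl, w, hadj, hab ▸ hb⟩)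
  classical
  refine hmin.1 ⟨fun w => if h : ∃ a n, ForcesIn G L n y (w, a) then h.choose else f w, ?_, ?_⟩
  · intro w _
    by_cases h : ∃ a n, ForcesIn G L n y (w, a)
    · simp only [dif_pos h]
      obtain ⟨n, hn⟩ := h.choose_spec
      exact hmem _ _ hn
    · simp only [dif_neg h]
      exact hf1 w h
  · intro u _ w _ hadj
    by_cases hu : ∃ a n, ForcesIn G L n y (u, a) <;> by_cases hw : ∃ a n, ForcesIn G L n y (w, a)
    · simp only [dif_pos hu, dif_pos hw]
      obtain ⟨m, hm⟩ := hu.choose_spec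
      obtain ⟨n, hn⟩ := hw.choose_spec
      exact fun e => hclash _ _ _ _ hm hn ⟨hadj, e⟩
    · simp only [dif_pos hu, dif_neg hw]
      obtain ⟨m, hm⟩ := hu.choose_spec
      exact (houter u w _ m hm hw hadj).symm
    · simp only [dif_neg hu, dif_pos hw]
      obtain ⟨n, hn⟩ := hw.choose_spec
      exact houter w u _ n hn hu hadj.symm
    · simp only [dif_neg hu, dif_neg hw]
      exact hf2 u hu w hw hadj

/-- A propagation from `y` to a contradiction with the least number of steps. -/
theorem exists_minimal_chain {y : V × ℕ}
    (hex : ∃ a b x z, ForcesIn G L a y x ∧ ForcesIn G L b x z ∧ Contradicts G L x z) :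
    ∃ g s t, g 0 = y ∧ IsForcingChain G L g t ∧ s ≤ t ∧ Contradicts G L (g s) (g t) ∧
      ∀ a b x z, ForcesIn G L a y x → ForcesIn G L b x z → Contradicts G L x z → t ≤ a + b := by
  classical
  have hex' : ∃ t a b x z, t = a + b ∧ ForcesIn G L a y x ∧ ForcesIn G L b x z ∧
      Contradicts G L x z := by
    obtain ⟨a, b, x, z, h⟩ := hex
    exact ⟨_, a, b, x, z, rfl, h⟩
  obtain ⟨a, b, x, z, ht, hx, hz, hc⟩ := Nat.find_spec hex'
  obtain ⟨g, hg0, hga, hgt, hchain⟩ := hx.exists_chain hz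
  refine ⟨g, a, a + b, hg0, hchain, by omega, by rw [hga, hgt]; exact hc, ?_⟩
  intro a' b' x' z' hx' hz' hc'
  rw [← ht]
  exact Nat.find_min' hex' ⟨a', b', x', z', rfl, hx', hz', hc'⟩

/-- The vertices of a shortest propagation to a contradiction are distinct. -/
theorem IsForcingChain.fst_ne_of_minimal {g : ℕ → V × ℕ} {s t : ℕ} (h : IsForcingChain G L g t)
    (h0 : (g 0).2 ∈ L (g 0).1) (hst : s ≤ t) (hcon : Contradicts G L (g s) (g t))
    (hmint : ∀ a b x z, ForcesIn G L a (g 0) x → ForcesIn G L b x z → Contradicts G L x z →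
      t ≤ a + b) {i j : ℕ} (hij : i < j) (hj : j ≤ t) : (g i).1 ≠ (g j).1 := by
  intro hv
  by_cases hc : (g i).2 = (g j).2
  · have he : g i = g j := Prod.ext hv hc
    have h0i := h.forcesIn (Nat.zero_le i) (by omega)
    have hjt := h.forcesIn hj le_rfl
    rcases Nat.lt_or_ge i s with his | his
    · rcases Nat.lt_or_ge s j with hsj | hsj
      · rcases hcon with hcl | ⟨hcl, hq⟩
        · obtain ⟨z', hz', hcz⟩ := hjt.exists_reverse hcl
          have := hmint _ _ _ _ h0i ((h.forcesIn his.le hst).trans hz')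
            (Or.inl (he ▸ hcz.symm))
          omega
        · have := hmint _ 0 _ _ (h.forcesIn (Nat.zero_le s) hst) rfl (Or.inr ⟨rfl, hcl ▸ hq⟩)
          omega
      · have := hmint _ _ _ _ (h0i.trans (he ▸ h.forcesIn hsj hst)) (h.forcesIn hst le_rfl) hcon
        omega
    · have := hmint _ _ _ _ (h.forcesIn (Nat.zero_le s) hst)
        ((h.forcesIn his (by omega)).trans (he ▸ hjt)) hcon
      omega
  · have := hmint _ _ _ _ (h.forcesIn (Nat.zero_le i) (by omega))
      (h.forcesIn (Nat.le_sub_one_of_lt hij) (by omega))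
      (Or.inl (h.clash_of_fst_eq h0 hij hj hv hc))
    omega

/-- If chords of a chain segment violating the shape condition can only start at or before its
first vertex outside `K`, then at most `lam` of its vertices lie outside `K`. -/
theorem IsForcingChain.card_image_sdiff_le [DecidableEq V] {lam : ℕ}
    (hpaths : ∀ P : PropPath G L, P.n + 1 ≤ lam) {g : ℕ → V × ℕ} {t A B : ℕ}
    (h : IsForcingChain G L g t) (h0 : (g 0).2 ∈ L (g 0).1) (hB : B ≤ t)
    (hinj : ∀ i j, i < j → j ≤ t → (g i).1 ≠ (g j).1) (K : Finset V)
    (hgood : ∀ p i j, A ≤ p → (g p).1 ∉ K → p < i → i + 2 ≤ j → j < B →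
      G.Adj (g i).1 (g j).1 → (g i).2 ∉ L (g j).1 ∧ (g j).2 ∈ L (g i).1) :
    (((Finset.Ico A B).image fun k => (g k).1) \ K).card ≤ lam := by
  by_cases hex : ∃ p, A ≤ p ∧ p < B ∧ (g p).1 ∉ K
  · obtain ⟨hA, hpB, hpK⟩ := Nat.find_spec hex
    set p := Nat.find hex
    have hsubset : (((Finset.Ico A B).image fun k => (g k).1) \ K) ⊆
        (Finset.Ico p B).image fun k => (g k).1 := by
      intro w hw
      simp only [Finset.mem_sdiff, Finset.mem_image, Finset.mem_Ico] at hw ⊢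
      obtain ⟨⟨k, ⟨hk1, hk2⟩, rfl⟩, hkK⟩ := hw
      exact ⟨k, ⟨Nat.find_min' hex ⟨hk1, hk2, hkK⟩, hk2⟩, rfl⟩
    have hlen := h.length_le hpaths h0 (p := p) (r := B - 1) (by omega) (by omega) hinj
      (fun i j hi hij hj => hgood p i j hA hpK hi hij (by omega))
    have h1 := Finset.card_le_card hsubset
    have h2 := Finset.card_image_le (s := Finset.Ico p B) (f := fun k => (g k).1)
    rw [Nat.card_Ico] at h2
    omega
  · push Not at hex
    rw [Finset.card_eq_zero.mpr]
    · exact Nat.zero_le _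
    · refine Finset.sdiff_eq_empty_iff_subset.mpr fun w hw => ?_
      simp only [Finset.mem_image, Finset.mem_Ico] at hw
      obtain ⟨k, ⟨hk1, hk2⟩, rfl⟩ := hw
      exact hex k hk1 hk2

/-- If `K` forces the start of a shortest propagation to a contradiction, a minimal obstruction
has few vertices outside `K`. -/
theorem MinimalListObstruction.card_le_of_forcing [Fintype V]
    (hsub : ∀ v, L v ⊆ ({1, 2, 3} : Finset ℕ)) (hmin : MinimalListObstruction G L) {lam : ℕ}
    (hpaths : ∀ P : PropPath G L, P.n + 1 ≤ lam) {g : ℕ → V × ℕ} {s t : ℕ}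
    (h : IsForcingChain G L g t) (h0 : (g 0).2 ∈ L (g 0).1) (hst : s ≤ t)
    (hcon : Contradicts G L (g s) (g t))
    (hmint : ∀ a b x z, ForcesIn G L a (g 0) x → ForcesIn G L b x z → Contradicts G L x z →
      t ≤ a + b) (K : Finset V)
    (hforce : ∀ S f, ↑K ⊆ S → IsListColoring G L S f → f (g 0).1 = (g 0).2)
    (hend : ∀ S f, ↑K ⊆ S → (g s).1 ∈ S → (g t).1 ∈ S → IsListColoring G L S f →
      f (g s).1 = (g s).2 → f (g t).1 ≠ (g t).2) :
    Fintype.card V ≤ K.card + 2 * lam + 2 := by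
  classical
  have hinj : ∀ i j, i < j → j ≤ t → (g i).1 ≠ (g j).1 := fun i j hij hj =>
    h.fst_ne_of_minimal h0 hst hcon hmint hij hj
  have hcover : ∀ w, w ∈ K ∨ ∃ k ≤ t, (g k).1 = w := by
    intro w
    by_contra! hw
    obtain ⟨f, hf⟩ := hmin.exists_coloring_compl w
    have hK : (K : Set V) ⊆ {w}ᶜ := fun u hu e => hw.1 (by obtain rfl : u = w := e; exact hu)
    have hk : ∀ k ≤ t, (g k).1 ∈ ({w}ᶜ : Set V) := fun k hk => hw.2 k hk
    have f0 := hforce _ f hK hf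
    exact hend _ f hK (hk s hst) (hk t le_rfl) hf
      (h.coloring_eq (Nat.zero_le s) hst hf (fun k _ hks => hk k (by omega)) f0)
      (h.coloring_eq (Nat.zero_le t) le_rfl hf (fun k _ hkt => hk k hkt) f0)
  have hgood : ∀ p i j, (j < s ∨ s < p) → (g p).1 ∉ K → p < i → i + 2 ≤ j → j < t →
      G.Adj (g i).1 (g j).1 → (g i).2 ∉ L (g j).1 ∧ (g j).2 ∈ L (g i).1 := by
    intro p i j hps hpK hpi hij hjt hadj
    have hnotclash : (g i).2 ≠ (g j).2 := by
      intro e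
      have := hmint _ _ _ _ (h.forcesIn (Nat.zero_le i) (by omega))
        (h.forcesIn (show i ≤ j by omega) (by omega)) (Or.inl ⟨hadj, e⟩)
      omega
    have h1 : (g i).2 ∉ L (g j).1 := by
      intro hm
      have hs : Forces G L (g i) (g j) :=
        ⟨hadj, hm, h.mem h0 hjt.le, hnotclash.symm, h.card_eq_two (by omega) hjt.le⟩
      have h0i := h.forcesIn (Nat.zero_le i) (by omega)
      rcases hps with hjs | hsp
      · have := hmint _ _ _ _ ((h0i.trans hs.forcesIn).trans (h.forcesIn hjs.le hst))
          (h.forcesIn hst le_rfl) hcon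
        omega
      · have := hmint _ _ _ _ (h.forcesIn (Nat.zero_le s) hst)
          (((h.forcesIn (show s ≤ i by omega) (by omega)).trans hs.forcesIn).trans
            (h.forcesIn hjt.le le_rfl)) hcon
        omega
    refine ⟨h1, ?_⟩
    by_contra h2
    obtain ⟨f, hf⟩ := hmin.exists_coloring_compl (g p).1
    have hK : (K : Set V) ⊆ {(g p).1}ᶜ := fun u hu e => hpK (by
      obtain rfl : u = (g p).1 := e
      exact hu)
    have hk : ∀ k ≤ t, k ≠ p → (g k).1 ∈ ({(g p).1}ᶜ : Set V) := by
      intro k hkt hkp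
      rcases lt_or_gt_of_ne hkp with hlt | hlt
      · exact hinj k p hlt (by omega)
      · exact (hinj p k hlt hkt).symm
    have fj := h.coloring_eq_of_chord hsub h0 (by omega) hjt.le hadj h1 h2 hf
      (fun k h1 h2 => hk k (by omega) (by omega))
    have ft := h.coloring_eq hjt.le le_rfl hf (fun k h1 h2 => hk k h2 (by omega)) fj
    have fs : f (g s).1 = (g s).2 := by
      rcases hps with hjs | hsp
      · exact h.coloring_eq hjs.le hst hf (fun k h1 h2 => hk k (by omega) (by omega)) fj
      · exact h.coloring_eq (Nat.zero_le s) hst hf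
          (fun k h1 h2 => hk k (by omega) (by omega)) (hforce _ f hK hf)
    exact hend _ f hK (hk s hst (by omega)) (hk t le_rfl (by omega)) hf fs ft
  have hstem := h.card_image_sdiff_le (A := 0) hpaths h0 hst hinj K
    (fun p i j _ hpK hpi hij hj => hgood p i j (Or.inl hj) hpK hpi hij (by omega))
  have hcycle := h.card_image_sdiff_le (A := s + 1) hpaths h0 le_rfl hinj K
    (fun p i j hp hpK hpi hij hj => hgood p i j (Or.inr (by omega)) hpK hpi hij hj)
  set X := ((Finset.Ico 0 s).image fun k => (g k).1) \ K with hX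
  set Y := ((Finset.Ico (s + 1) t).image fun k => (g k).1) \ K with hY
  have huniv : (Finset.univ : Finset V) ⊆ (K ∪ (X ∪ Y)) ∪ {(g s).1, (g t).1} := by
    intro w _
    simp only [hX, hY, Finset.mem_union, Finset.mem_sdiff, Finset.mem_image, Finset.mem_Ico,
      Finset.mem_insert, Finset.mem_singleton]
    by_cases hwK : w ∈ K
    · exact Or.inl (Or.inl hwK)
    obtain ⟨k, hk, rfl⟩ := (hcover w).resolve_left hwK
    rcases lt_trichotomy k s with hlt | rfl | hlt
    · exact Or.inl (Or.inr (Or.inl ⟨⟨k, ⟨by omega, hlt⟩, rfl⟩, hwK⟩))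
    · exact Or.inr (Or.inl rfl)
    · rcases Nat.lt_or_ge k t with hkt | hkt
      · exact Or.inl (Or.inr (Or.inr ⟨⟨k, ⟨hlt, hkt⟩, rfl⟩, hwK⟩))
      · obtain rfl : k = t := by omega
        exact Or.inr (Or.inr rfl)
  have c1 := Finset.card_le_card huniv
  have c2 := Finset.card_union_le (K ∪ (X ∪ Y)) {(g s).1, (g t).1}
  have c3 := Finset.card_union_le K (X ∪ Y)
  have c4 := Finset.card_union_le X Y
  have c5 := Finset.card_le_two (a := (g s).1) (b := (g t).1)
  rw [Finset.card_univ] at c1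
  omega

/-- If `K` forces the color `y.2` at `y.1`, a minimal obstruction has few vertices outside `K`. -/
theorem MinimalListObstruction.card_le [Fintype V]
    (hsub : ∀ v, L v ⊆ ({1, 2, 3} : Finset ℕ)) (hsize : ∀ v, (L v).card ≤ 2)
    (hmin : MinimalListObstruction G L) {lam : ℕ}
    (hpaths : ∀ P : PropPath G L, P.n + 1 ≤ lam) {y : V × ℕ} (hy : y.2 ∈ L y.1) (K : Finset V)
    (hforce : ∀ S f, ↑K ⊆ S → IsListColoring G L S f → f y.1 = y.2) :
    Fintype.card V ≤ K.card + 2 * lam + 3 := by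
  classical
  obtain ⟨g, s, t, rfl, hchain, hst, hcon, hmint⟩ :=
    exists_minimal_chain (hmin.exists_contradicts hsize y hy)
  rcases id hcon with hcl | ⟨-, q, hadj, hq⟩
  · have := hmin.card_le_of_forcing hsub hpaths hchain hy hst hcon hmint K hforce
      (fun S f _ hs ht hf fs ft => hf.2 _ hs _ ht hcl.1 (by rw [fs, ft]; exact hcl.2))
    omega
  · have := hmin.card_le_of_forcing hsub hpaths hchain hy hst hcon hmint (insert q K)
      (fun S f hK => hforce S f ((Finset.coe_subset.mpr (Finset.subset_insert q K)).trans hK))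
      (fun S f hK _ ht hf _ ft => by
        have hqS : q ∈ S := hK (by simp)
        have := hf.1 q hqS
        rw [hq, Finset.mem_singleton] at this
        exact hf.2 _ ht _ hqS hadj (by rw [ft, this]))
    have := Finset.card_insert_le q K
    omega

/-- A shortest propagation in which the last vertex clashes with the first one has no chords,
apart from those at its last vertex, that violate the shape condition. -/
theorem IsForcingChain.length_le_of_minimal_clash
    (hsub : ∀ v, L v ⊆ ({1, 2, 3} : Finset ℕ)) {lam : ℕ}
    (hpaths : ∀ P : PropPath G L, P.n + 1 ≤ lam) {g : ℕ → V × ℕ} {m : ℕ}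
    (h : IsForcingChain G L g m) (h0 : (g 0).2 ∈ L (g 0).1) (hcard : ∀ v, (L v).card = 2)
    (hcl : Clash G (g 0) (g m))
    (hminm : ∀ n x z, x.2 ∈ L x.1 → ForcesIn G L n x z → Clash G x z → m ≤ n) : m ≤ lam := by
  have hm : m ≠ 0 := by
    rintro rfl
    exact G.loopless.irrefl _ hcl.1
  have hinj : ∀ i j, i < j → j ≤ m → (g i).1 ≠ (g j).1 := by
    intro i j hij hj hv
    by_cases hc : (g i).2 = (g j).2
    · have he : g i = g j := Prod.ext hv hc
      have := hminm _ _ _ h0 ((h.forcesIn (Nat.zero_le i) (by omega)).trans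
        (he ▸ h.forcesIn hj le_rfl)) hcl
      omega
    · have := hminm _ _ _ (h.mem h0 (by omega)) (h.forcesIn (Nat.le_sub_one_of_lt hij) (by omega))
        (h.clash_of_fst_eq h0 hij hj hv hc)
      omega
  have := h.length_le hpaths h0 (p := 0) (r := m - 1) (by omega) (by omega) hinj ?_
  · omega
  intro i j hi hij hj hadj
  have hnotclash : (g i).2 ≠ (g j).2 := by
    intro e
    have := hminm _ _ _ (h.mem h0 (by omega)) (h.forcesIn (show i ≤ j by omega) (by omega))
      ⟨hadj, e⟩
    omega
  have h1 : (g i).2 ∉ L (g j).1 := by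
    intro hmem
    have hs : Forces G L (g i) (g j) :=
      ⟨hadj, hmem, h.mem h0 (by omega), hnotclash.symm, hcard _⟩
    have := hminm _ _ _ h0 (((h.forcesIn (Nat.zero_le i) (by omega)).trans hs.forcesIn).trans
      (h.forcesIn (show j ≤ m by omega) le_rfl)) hcl
    omega
  refine ⟨h1, ?_⟩
  by_contra h2
  obtain ⟨k, rfl⟩ : ∃ k, j = k + 1 := ⟨j - 1, by omega⟩
  obtain ⟨hadjk, hk1, hk2, hkne, -⟩ := h k (by omega)
  have hmi := h.mem h0 (i := i) (by omega)
  have hki : (g k).2 ∈ L (g i).1 ∧ (g i).2 ≠ (g k).2 := by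
    obtain ⟨d, hd, hdne⟩ := Finset.exists_mem_ne
      (show 1 < (L (g i).1).card by rw [hcard]; omega) (g i).2
    have b1 := hsub _ hmi
    have b2 := hsub _ hd
    have b3 := hsub _ hk1
    have b4 := hsub _ hk2
    have n1 : (g k).2 ≠ (g i).2 := fun e => h1 (e ▸ hk1)
    have n2 : d ≠ (g (k + 1)).2 := fun e => h2 (e ▸ hd)
    simp only [Finset.mem_insert, Finset.mem_singleton] at b1 b2 b3 b4
    obtain rfl : d = (g k).2 := by omega
    exact ⟨hd, n1.symm⟩
  have hs : Forces G L ((g (k + 1)).1, (g k).2) (g i) :=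
    ⟨hadj.symm, hki.1, hmi, hki.2, hcard _⟩
  have := hminm _ _ _ hk1 (hs.forcesIn.trans (h.forcesIn (show i ≤ k by omega) (by omega)))
    ⟨hadjk.symm, rfl⟩
  omega

end ListPropagation

theorem stmt_15 {V : Type*} [Fintype V] (G : SimpleGraph V) (L : V → Finset ℕ)
    (hsub : ∀ v, L v ⊆ ({1, 2, 3} : Finset ℕ)) (hsize : ∀ v, (L v).card ≤ 2)
    (hmin : MinimalListObstruction G L) (lam : ℕ) (hlam : 20 ≤ lam)
    (hpaths : ∀ P : PropPath G L, P.n + 1 ≤ lam) :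
    Fintype.card V ≤ 4 * lam + 4 := by
  classical
  by_cases hempty : ∃ u, (L u).card = 0
  · obtain ⟨u, hu⟩ := hempty
    have huniv : ∀ w, w = u := by
      by_contra! hw
      obtain ⟨w, hw⟩ := hw
      obtain ⟨f, hf⟩ := hmin.exists_coloring_compl w
      have := hf.1 u hw.symm
      rw [Finset.card_eq_zero.mp hu] at this
      simp at this
    have := Fintype.card_le_one_iff.mpr fun a b => (huniv a).trans (huniv b).symm
    omega
  by_cases hunit : ∃ u, (L u).card = 1
  · obtain ⟨u, hu⟩ := hunit
    obtain ⟨a, ha⟩ := Finset.card_eq_one.mp hu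
    have := hmin.card_le hsub hsize hpaths (y := (u, a)) (by simp [ha]) {u} (by
      intro S f hK hf
      have := hf.1 u (hK (by simp))
      simpa [ha] using this)
    rw [Finset.card_singleton] at this
    omega
  have hcard : ∀ v, (L v).card = 2 := by
    intro v
    have := hsize v
    have h1 : (L v).card ≠ 0 := fun e => hempty ⟨v, e⟩
    have h2 : (L v).card ≠ 1 := fun e => hunit ⟨v, e⟩
    omega
  obtain ⟨u⟩ : Nonempty V := by
    by_contra hne
    exact hmin.1 ⟨fun _ => 0, fun v => (hne ⟨v⟩).elim, fun v => (hne ⟨v⟩).elim⟩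
  obtain ⟨e, he⟩ := Finset.card_pos.mp (show 0 < (L u).card by rw [hcard]; omega)
  have hex : ∃ n x z, x.2 ∈ L x.1 ∧ ForcesIn G L n x z ∧ Clash G x z := by
    obtain ⟨a, b, x, z, hx, hz, hc⟩ := hmin.exists_contradicts hsize (u, e) he
    refine ⟨b, x, z, ?_, hz, hc.resolve_right ?_⟩
    · cases a with
      | zero => obtain rfl : (u, e) = x := hx; exact he
      | succ a => obtain ⟨w, -, hw⟩ := hx; exact hw.2.2.1
    · rintro ⟨-, q, -, hq⟩
      have := hcard q
      simp [hq] at this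
  obtain ⟨x, z, hx0, hxz, hcl⟩ := Nat.find_spec hex
  obtain ⟨g, rfl, -, hgm, hchain⟩ := ForcesIn.exists_chain (a := 0) rfl hxz
  rw [Nat.zero_add] at hgm hchain
  subst hgm
  have hminm : ∀ n x z, x.2 ∈ L x.1 → ForcesIn G L n x z → Clash G x z → Nat.find hex ≤ n :=
    fun n x z hx hn hc => Nat.find_min' hex ⟨x, z, hx, hn, hc⟩
  have hlen := hchain.length_le_of_minimal_clash hsub hpaths hx0 hcard hcl hminm
  set m := Nat.find hex
  obtain ⟨d, hd, hdne⟩ := Finset.exists_mem_ne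
    (show 1 < (L (g 0).1).card by rw [hcard]; omega) (g 0).2
  have := hmin.card_le hsub hsize hpaths (y := ((g 0).1, d)) hd
    ((Finset.range (m + 1)).image fun k => (g k).1) (by
      intro S f hK hf
      have hk : ∀ k ≤ m, (g k).1 ∈ S := fun k hk =>
        hK (Finset.mem_coe.mpr (Finset.mem_image_of_mem _ (Finset.mem_range.mpr (by omega))))
      refine eq_of_mem_of_card_eq_two (hcard _) (hf.1 _ (hk 0 (by omega))) hx0 hd ?_ hdne
      intro e
      have hm := hchain.coloring_eq (Nat.zero_le m) le_rfl hf (fun k _ => hk k) e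
      exact hf.2 _ (hk 0 (by omega)) _ (hk m le_rfl) hcl.1 (by rw [e, hm]; exact hcl.2))
  have h2 := Finset.card_image_le (s := Finset.range (m + 1)) (f := fun k => (g k).1)
  rw [Finset.card_range] at h2
  omega
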